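/- Fix integers k ≥ r ≥ 3, a real α ∈ (0,1), u ∈ ω(1) ∩ o(n), and a constant μ > μ_c(k,r). Then, for the random bipartite graph ensemble with n variables and m = ⌈μ·n^{r−1}/u(n)^{r−2}⌉ constraints, there is a constant C such that for all sufficiently large n, the probability that there is NO (k−r+2)-stopping set of size at least αn contained in {u(n)+1,…,n} is at least 1 − exp( (sup_{τ>0} inf_{λ<0} φ_{k,r}(μ,λ,τ))·u(n) + C·max{u(n)²/n, log u(n)} ); in particular this probability tends to 1 exponentially fast in u(n). -/

import Mathlib

open Filter Finset Asymptotics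

noncomputable section

/-- Neighborhood `∂(a)` of constraint `a` in the bipartite graph given by `ω`. -/
def nbhd {n m k : ℕ} (ω : Fin m → (Fin k ↪ Fin n)) (a : Fin m) : Finset (Fin n) :=
  Finset.univ.image (ω a)

/-- `V` is a `d`-stopping set: every constraint meets `V` in `0` or at least `d` variables. -/
def IsStoppingSet {n m k : ℕ} (d : ℕ) (ω : Fin m → (Fin k ↪ Fin n))
    (V : Finset (Fin n)) : Prop :=
  ∀ a : Fin m, (nbhd ω a ∩ V).card = 0 ∨ d ≤ (nbhd ω a ∩ V).card

/-- Probability of an event under the uniform random bipartite-graph ensemble: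
each of the `m` constraints independently picks a uniformly random `k`-tuple of
distinct indices from `{1,…,n}` (an embedding `Fin k ↪ Fin n`). -/
def prG (n m k : ℕ) (P : (Fin m → (Fin k ↪ Fin n)) → Prop) : ℝ :=
  letI := Classical.decPred P
  ((Finset.univ.filter P).card : ℝ) / (Fintype.card (Fin m → (Fin k ↪ Fin n)) : ℝ)

/-- `u ∈ ω(1) ∩ o(n)`. -/
def UGood (u : ℕ → ℕ) : Prop :=
  Tendsto (fun n => (u n : ℝ)) atTop atTop ∧
    Tendsto (fun n => (u n : ℝ) / (n : ℝ)) atTop (nhds 0)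

/-- `μ_c(k,r) = binom(k,r)⁻¹ (r-2)^(r-2) / (r (r-1)^(r-1))`. -/
def muc (k r : ℕ) : ℝ :=
  ((k.choose r : ℝ))⁻¹ * (((r : ℝ) - 2) ^ (r - 2) / ((r : ℝ) * ((r : ℝ) - 1) ^ (r - 1)))

/-- `φ_{k,r}(μ,λ,τ) = μ (e^{(k-r+1)λ} - 1) binom(k,r-1) (1+τ)^{r-1} - λτ`. -/
def phiE (k r : ℕ) (μ lam τ : ℝ) : ℝ :=
  μ * (Real.exp (((k : ℝ) - (r : ℝ) + 1) * lam) - 1) * (k.choose (r - 1) : ℝ)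
      * (1 + τ) ^ (r - 1)
    - lam * τ

/-- Membership in the local marginal polytope LOCAL: each `B a` is a distribution on
`[q]^k`, each `b i` is a distribution on `[q]`, and the marginalization conditions hold. -/
def MemLOCAL {n m q k : ℕ} (nb : Fin m → (Fin k ↪ Fin n))
    (b : Fin n → Fin q → ℝ) (B : Fin m → (Fin k → Fin q) → ℝ) : Prop :=
  (∀ i x, 0 ≤ b i x) ∧ (∀ i, ∑ x, b i x = 1) ∧
  (∀ a z, 0 ≤ B a z) ∧ (∀ a, ∑ z, B a z = 1) ∧
  (∀ (a : Fin m) (j : Fin k) (x : Fin q),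
    b (nb a j) x = ∑ z : Fin k → Fin q, if z j = x then B a z else 0)

/-- A point of LOCAL is zero-optimal if each `B a` is supported on `f_a⁻¹(y_a)`. -/
def ZeroOptimal {m q k l : ℕ} (f : Fin m → (Fin k → Fin q) → (Fin l → Fin q))
    (y : Fin m → Fin l → Fin q) (B : Fin m → (Fin k → Fin q) → ℝ) : Prop :=
  ∀ a z, B a z ≠ 0 → f a z = y a

/-- Integral part of a point of LOCAL. -/
def integralPart {n q : ℕ} (b : Fin n → Fin q → ℝ) : Finset (Fin n) :=
  letI := Classical.decPred fun i : Fin n => ∃ x : Fin q, b i x = 1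
  Finset.univ.filter fun i : Fin n => ∃ x : Fin q, b i x = 1

/-- `f : [q]^k → [q]^l` is `w`-wise independent. -/
def WiseIndep (q k l w : ℕ) (f : (Fin k → Fin q) → (Fin l → Fin q)) : Prop :=
  ∀ T : Finset (Fin k), T.card ≤ w → ∀ xT : Fin k → Fin q, ∀ y : Fin l → Fin q,
    (Finset.univ.filter fun x : Fin k → Fin q =>
        (∀ i ∈ T, x i = xT i) ∧ f x = y).card
      = q ^ (k - T.card - l)

/-- Minimum Hamming distance of a code. -/
def minHammingDist {A : Type*} [DecidableEq A] {k : ℕ} (M : Finset (Fin k → A)) : ℕ :=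
  sInf {d | ∃ x ∈ M, ∃ y ∈ M, x ≠ y ∧ hammingDist x y = d}

/-- `M` is an MDS code of length `k` and dimension `r-1`. -/
def IsMDSCode (A : Type*) [Fintype A] [DecidableEq A] (k r : ℕ)
    (M : Finset (Fin k → A)) : Prop :=
  M.card = Fintype.card A ^ (r - 1) ∧ minHammingDist M = k - r + 2

/-- `f` has MDS inverse image of dimension `r-1`. -/
def HasMDSInv (q k r : ℕ) (f : (Fin k → Fin q) → (Fin (k - r + 1) → Fin q)) : Prop :=
  ∀ y : Fin (k - r + 1) → Fin q,
    IsMDSCode (Fin q) k r (Finset.univ.filter fun x => f x = y)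

instance {n m k : ℕ} (d : ℕ) (ω : Fin m → (Fin k ↪ Fin n)) :
    DecidablePred fun V : Finset (Fin n) => IsStoppingSet d ω V := fun V => by
  unfold IsStoppingSet; infer_instance

/-- range of an embedding -/
def rg {n k : ℕ} (τ : Fin k ↪ Fin n) : Finset (Fin n) := Finset.univ.image τ

lemma rg_card {n k : ℕ} (τ : Fin k ↪ Fin n) : (rg τ).card = k := by
  unfold rg
  rw [Finset.card_image_of_injective _ τ.injective]; simp

def Unt {n k : ℕ} (q : ℕ) (P : Finset (Fin n)) : Finset (Fin k ↪ Fin n) :=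
  Finset.univ.filter fun τ => (rg τ ∩ P).card ≤ q

def Trg {n k : ℕ} (q : ℕ) (P : Finset (Fin n)) (v : Fin n) : Finset (Fin k ↪ Fin n) :=
  Finset.univ.filter fun τ => (rg τ ∩ P).card = q ∧ v ∈ rg τ

lemma inter_insert_card {n k : ℕ} (τ : Fin k ↪ Fin n) (P : Finset (Fin n)) (v : Fin n)
    (hv : v ∉ P) : (rg τ ∩ insert v P).card = (rg τ ∩ P).card + if v ∈ rg τ then 1 else 0 := by
  split_ifs with h
  · rw [Finset.inter_insert_of_mem h, Finset.card_insert_of_notMem]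
    simp [hv]
  · rw [Finset.inter_insert_of_notMem h]; simp

lemma Unt_card {n k : ℕ} (q : ℕ) (P : Finset (Fin n)) (v : Fin n) (hv : v ∉ P) :
    (Unt q P : Finset (Fin k ↪ Fin n)).card
      = (Unt q (insert v P) : Finset (Fin k ↪ Fin n)).card
        + (Trg q P v : Finset (Fin k ↪ Fin n)).card := by
  classical
  rw [← Finset.card_union_of_disjoint]
  · congr 1
    ext τ
    simp only [Unt, Trg, Finset.mem_union, Finset.mem_filter, Finset.mem_univ, true_and,
      inter_insert_card τ P v hv]
    split_ifs with h <;> simp [h]; omega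
  · rw [Finset.disjoint_left]
    intro τ
    simp only [Unt, Trg, Finset.mem_filter, Finset.mem_univ, true_and,
      inter_insert_card τ P v hv]
    rintro h1 ⟨h2, h3⟩
    simp [h3] at h1
    omega

def Clsd {n m k : ℕ} (q : ℕ) (ω : Fin m → (Fin k ↪ Fin n)) (W : Finset (Fin n)) : Prop :=
  ∀ a, rg (ω a) ⊆ W ∨ (rg (ω a) ∩ W).card ≤ q

open Classical in
def cl {n m k : ℕ} (q : ℕ) (ω : Fin m → (Fin k ↪ Fin n)) (L : Finset (Fin n)) :
    Finset (Fin n) :=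
  Finset.univ.filter fun i => ∀ W, L ⊆ W → Clsd q ω W → i ∈ W

lemma subset_cl {n m k : ℕ} (q : ℕ) (ω : Fin m → (Fin k ↪ Fin n)) (L : Finset (Fin n)) :
    L ⊆ cl q ω L := by
  intro i hi
  simp only [cl, Finset.mem_filter, Finset.mem_univ, true_and]
  intro W hW _
  exact hW hi

lemma cl_subset {n m k : ℕ} (q : ℕ) (ω : Fin m → (Fin k ↪ Fin n)) (L W : Finset (Fin n))
    (h : L ⊆ W) (hW : Clsd q ω W) : cl q ω L ⊆ W := by
  intro i hi
  simp only [cl, Finset.mem_filter, Finset.mem_univ, true_and] at hi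
  exact hi W h hW

lemma cl_union {n m k : ℕ} (q : ℕ) (ω : Fin m → (Fin k ↪ Fin n)) (L : Finset (Fin n))
    (a : Fin m) (h : q < (rg (ω a) ∩ L).card) : cl q ω (L ∪ rg (ω a)) = cl q ω L := by
  ext i
  simp only [cl, Finset.mem_filter, Finset.mem_univ, true_and]
  constructor
  · intro H W hW hc
    refine H W (Finset.union_subset hW ?_) hc
    rcases hc a with h1 | h1
    · exact h1
    · have := Finset.card_le_card (Finset.inter_subset_inter (Finset.Subset.refl (rg (ω a))) hW)
      omega
  · intro H W hW hc
    exact H W (Finset.subset_union_left.trans hW) hc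

section expl
variable {n k : ℕ}

def sset (q : ℕ) : Finset (Fin n) ⊕ (Fin k ↪ Fin n) → Finset (Fin k ↪ Fin n)
  | .inl P => Unt q P
  | .inr τ => {τ}

def sok (L : Finset (Fin n)) : Finset (Fin n) ⊕ (Fin k ↪ Fin n) → Prop
  | .inl P => P ⊆ L
  | .inr τ => rg τ ⊆ L

def swt (q : ℕ) (A x : ℝ) : Finset (Fin n) ⊕ (Fin k ↪ Fin n) → ℝ
  | .inl P => A * (1 - x) + ((Unt q P : Finset (Fin k ↪ Fin n)).card : ℝ) * x
  | .inr _ => 1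

def sms : Finset (Fin n) ⊕ (Fin k ↪ Fin n) → ℕ
  | .inl P => n + 1 - P.card
  | .inr _ => 0

lemma sok_mono {L L' : Finset (Fin n)} (h : L ⊆ L') (s : Finset (Fin n) ⊕ (Fin k ↪ Fin n))
    (hs : sok L s) : sok L' s := by
  cases s with
  | inl P => exact Finset.Subset.trans hs h
  | inr τ => exact Finset.Subset.trans hs h

lemma swt_nonneg (q : ℕ) (A x : ℝ) (hA : 0 ≤ A) (hx : 0 ≤ x) (hx1 : x ≤ 1)
    (s : Finset (Fin n) ⊕ (Fin k ↪ Fin n)) : 0 ≤ swt q A x s := by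
  cases s with
  | inl P =>
    have : 0 ≤ 1 - x := by linarith
    simp only [swt]; positivity
  | inr τ => simp [swt]

lemma prod_upd {m : ℕ} {β : Type*} (f : β → ℝ) (s : Fin m → β) (a : Fin m) (y : β) :
    ∏ b, f (Function.update s a y b) = f y * ∏ b ∈ Finset.univ.erase a, f (s b) := by
  rw [← Finset.mul_prod_erase _ _ (Finset.mem_univ a)]
  simp only [Function.update_self]
  congr 1
  refine Finset.prod_congr rfl fun b hb => ?_
  rw [Function.update_of_ne (Finset.ne_of_mem_erase hb)]

lemma sum_upd {m : ℕ} {β : Type*} (f : β → ℕ) (s : Fin m → β) (a : Fin m) (y : β) :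
    ∑ b, f (Function.update s a y b) = f y + ∑ b ∈ Finset.univ.erase a, f (s b) := by
  rw [← Finset.add_sum_erase _ _ (Finset.mem_univ a)]
  simp only [Function.update_self]
  congr 1
  refine Finset.sum_congr rfl fun b hb => ?_
  rw [Function.update_of_ne (Finset.ne_of_mem_erase hb)]

open Classical in
lemma explore {m : ℕ} (q t : ℕ) (A x lam : ℝ) (hA : 0 ≤ A) (hx : 0 ≤ x) (hx1 : x ≤ 1)
    (hAt : ∀ L : Finset (Fin n), L.card = t → ((Unt q L : Finset (Fin k ↪ Fin n)).card : ℝ) ≤ A)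
    (hT : ∀ (P L : Finset (Fin n)) (v : Fin n), P ⊆ L → v ∈ L → v ∉ P → L.card ≤ t →
      ∑ τ ∈ (Trg q P v : Finset (Fin k ↪ Fin n)), Real.exp (lam * ((L ∪ rg τ).card : ℝ)) ≤
        Real.exp (lam * (L.card : ℝ)) * ((Trg q P v : Finset (Fin k ↪ Fin n)).card : ℝ) * x) :
    ∀ (N : ℕ) (s : Fin m → Finset (Fin n) ⊕ (Fin k ↪ Fin n)) (L : Finset (Fin n)),
      ∑ a, sms (s a) = N → (∀ a, sok L (s a)) →
      (((Fintype.piFinset fun a => sset q (s a)).filter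
          fun ω => (cl q ω L).card = t).card : ℝ) ≤
        Real.exp (lam * ((L.card : ℝ) - t)) * ∏ a, swt q A x (s a) := by
  intro N
  induction N using Nat.strong_induction_on with
  | _ N ih =>
  intro s L hN hok
  have hw := swt_nonneg (n := n) (k := k) q A x hA hx hx1
  by_cases hLt : t < L.card
  · rw [Finset.filter_false_of_mem]
    · simp only [Finset.card_empty, Nat.cast_zero]
      exact mul_nonneg (Real.exp_nonneg _) (Finset.prod_nonneg fun a _ => hw _)
    · intro ω _ h
      have := Finset.card_le_card (subset_cl q ω L)
      omega
  push Not at hLt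
  by_cases hex : ∃ a P v, s a = .inl P ∧ v ∈ L ∧ v ∉ P
  · obtain ⟨a, P, v, hsa, hvL, hvP⟩ := hex
    have hPL : P ⊆ L := by have := hok a; rw [hsa] at this; exact this
    set F : (Fin m → Finset (Fin n) ⊕ (Fin k ↪ Fin n)) → Finset (Fin n) →
      Finset (Fin m → (Fin k ↪ Fin n)) := fun s L =>
        (Fintype.piFinset fun a => sset q (s a)).filter fun ω => (cl q ω L).card = t with hF
    set R : ℝ := ∏ b ∈ Finset.univ.erase a, swt q A x (s b) with hR
    have hR0 : 0 ≤ R := Finset.prod_nonneg fun a _ => hw _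
    have hPn : P.card + 1 ≤ n := by
      have := Finset.card_le_univ (insert v P)
      rw [Finset.card_insert_of_notMem hvP] at this
      simpa using this
    have hsub : F s L ⊆ F (Function.update s a (.inl (insert v P))) L ∪
        (Trg q P v : Finset (Fin k ↪ Fin n)).biUnion fun τ =>
          F (Function.update s a (.inr τ)) (L ∪ rg τ) := by
      intro ω hω
      simp only [hF, Finset.mem_filter, Fintype.mem_piFinset] at hω
      obtain ⟨h1, h2⟩ := hω
      have ha := h1 a
      rw [hsa] at ha
      simp only [sset, Unt, Finset.mem_filter, Finset.mem_univ, true_and] at ha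
      rw [Finset.mem_union]
      by_cases hU : (rg (ω a) ∩ insert v P).card ≤ q
      · left
        simp only [hF, Finset.mem_filter, Fintype.mem_piFinset]
        refine ⟨fun b => ?_, h2⟩
        by_cases hb : b = a
        · subst hb
          simp only [Function.update_self, sset, Unt, Finset.mem_filter, Finset.mem_univ, true_and]
          exact hU
        · rw [Function.update_of_ne hb]; exact h1 b
      · right
        have hc : q < (rg (ω a) ∩ L).card := by
          have := Finset.card_le_card (Finset.inter_subset_inter (Finset.Subset.refl (rg (ω a)))
            (Finset.insert_subset hvL hPL))
          omega
        rw [inter_insert_card _ _ _ hvP] at hU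
        have hv : v ∈ rg (ω a) := by
          by_contra h
          simp [h] at hU; omega
        simp only [hv, if_true] at hU
        simp only [Finset.mem_biUnion]
        refine ⟨ω a, ?_, ?_⟩
        · simp only [Trg, Finset.mem_filter, Finset.mem_univ, true_and]
          exact ⟨by omega, hv⟩
        · simp only [hF, Finset.mem_filter, Fintype.mem_piFinset]
          refine ⟨fun b => ?_, ?_⟩
          · by_cases hb : b = a
            · subst hb
              simp [Function.update_self, sset]
            · rw [Function.update_of_ne hb]; exact h1 b
          · rw [cl_union q ω L a hc]; exact h2
    have hcard : ((F s L).card : ℝ) ≤ ((F (Function.update s a (.inl (insert v P))) L).card : ℝ) +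
        ∑ τ ∈ (Trg q P v : Finset (Fin k ↪ Fin n)),
          ((F (Function.update s a (.inr τ)) (L ∪ rg τ)).card : ℝ) := by
      have h1 := Finset.card_le_card hsub
      have h2 := h1.trans (Finset.card_union_le _ _)
      have h3 := h2.trans (Nat.add_le_add_left Finset.card_biUnion_le _)
      exact_mod_cast h3
    have hsum : ∑ b, sms (s b) = sms (s a) + ∑ b ∈ Finset.univ.erase a, sms (s b) :=
      (Finset.add_sum_erase _ _ (Finset.mem_univ a)).symm
    have i1 := ih _ (by
      rw [sum_upd, ← hN, hsum, hsa]
      simp only [sms]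
      rw [Finset.card_insert_of_notMem hvP]; omega)
      (Function.update s a (.inl (insert v P))) L rfl (by
        intro b
        by_cases hb : b = a
        · subst hb; simp only [Function.update_self, sok]; exact Finset.insert_subset hvL hPL
        · rw [Function.update_of_ne hb]; exact hok b)
    have i2 := fun τ : Fin k ↪ Fin n => ih _ (by
      rw [sum_upd, ← hN, hsum, hsa]
      simp only [sms]
      omega)
      (Function.update s a (.inr τ)) (L ∪ rg τ) rfl (by
        intro b
        by_cases hb : b = a
        · subst hb; simp only [Function.update_self, sok]; exact Finset.subset_union_right
        · rw [Function.update_of_ne hb]; exact sok_mono Finset.subset_union_left _ (hok b))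
    simp only [prod_upd] at i1 i2
    rw [← hR] at i1
    simp only [← hR] at i2
    have hsum2 : ∑ τ ∈ (Trg q P v : Finset (Fin k ↪ Fin n)),
          ((F (Function.update s a (.inr τ)) (L ∪ rg τ)).card : ℝ) ≤
        Real.exp (lam * ((L.card : ℝ) - t)) * ((Trg q P v : Finset (Fin k ↪ Fin n)).card : ℝ) * x
          * R := by
      calc _ ≤ ∑ τ ∈ (Trg q P v : Finset (Fin k ↪ Fin n)),
            Real.exp (lam * ((L ∪ rg τ).card : ℝ)) * (Real.exp (- lam * t) * R) := by
            refine Finset.sum_le_sum fun τ _ => (i2 τ).trans (le_of_eq ?_)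
            simp only [swt, one_mul]
            rw [← mul_assoc, ← Real.exp_add]
            congr 2; ring
        _ = (∑ τ ∈ (Trg q P v : Finset (Fin k ↪ Fin n)),
            Real.exp (lam * ((L ∪ rg τ).card : ℝ))) * (Real.exp (- lam * t) * R) := by
            rw [Finset.sum_mul]
        _ ≤ _ := mul_le_mul_of_nonneg_right (hT P L v hPL hvL hvP hLt)
            (mul_nonneg (Real.exp_nonneg _) hR0)
        _ = _ := by
            have : lam * ((L.card : ℝ) - t) = lam * L.card + - lam * t := by ring
            rw [this, Real.exp_add]; ring
    have hfin : Real.exp (lam * ((L.card : ℝ) - t)) * ∏ a, swt q A x (s a) =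
        Real.exp (lam * ((L.card : ℝ) - t)) * (swt q A x (.inl (insert v P) :
          Finset (Fin n) ⊕ (Fin k ↪ Fin n)) * R) +
        Real.exp (lam * ((L.card : ℝ) - t)) * ((Trg q P v : Finset (Fin k ↪ Fin n)).card : ℝ) * x
          * R := by
      rw [← Finset.mul_prod_erase _ _ (Finset.mem_univ a), ← hR, hsa]
      simp only [swt]
      rw [Unt_card q P v hvP]
      push_cast
      ring
    rw [hfin]
    exact hcard.trans (add_le_add i1 hsum2)
  · push Not at hex
    have hcl : ∀ ω ∈ Fintype.piFinset fun a => sset q (s a), cl q ω L = L := by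
      intro ω hω
      rw [Fintype.mem_piFinset] at hω
      refine Finset.Subset.antisymm (cl_subset q ω L L (Finset.Subset.refl _) ?_) (subset_cl q ω L)
      intro a
      have h1 := hω a
      have h2 := hok a
      rcases hs : s a with P | τ
      · right
        rw [hs] at h1 h2
        have hLP : L ⊆ P := fun v hv => hex a P v hs hv
        have : P = L := Finset.Subset.antisymm h2 hLP
        subst this
        simpa [sset, Unt] using h1
      · left
        rw [hs] at h1 h2
        simp only [sset, Finset.mem_singleton] at h1
        rw [h1]; exact h2
    by_cases hc : L.card = t
    · rw [hc]
      simp only [sub_self, mul_zero, Real.exp_zero, one_mul]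
      refine le_trans (Nat.cast_le.mpr (Finset.card_filter_le _ _)) ?_
      rw [Fintype.card_piFinset]
      push_cast
      refine Finset.prod_le_prod (fun _ _ => by positivity) fun a _ => ?_
      have h2 := hok a
      rcases hs : s a with P | τ
      · rw [hs] at h2
        have hLP : L ⊆ P := fun v hv => hex a P v hs hv
        have : P = L := Finset.Subset.antisymm h2 hLP
        subst this
        simp only [sset, swt]
        nlinarith [hAt P hc]
      · simp [sset, swt]
    · rw [Finset.filter_false_of_mem]
      · simp only [Finset.card_empty, Nat.cast_zero]
        exact mul_nonneg (Real.exp_nonneg _) (Finset.prod_nonneg fun a _ => hw _)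
      · intro ω hω h
        rw [hcl ω hω] at h
        exact hc h

end expl

section cnt
variable {n k : ℕ}

lemma rg_swap (τ : Fin k ↪ Fin n) (σ : Equiv.Perm (Fin n)) :
    rg (τ.trans σ.toEmbedding) = (rg τ).map σ.toEmbedding := by
  ext i
  simp [rg, Equiv.eq_symm_apply]

lemma trg_sym (q : ℕ) (P : Finset (Fin n)) (v w w' : Fin n) (hw : w ∉ insert v P)
    (hw' : w' ∉ insert v P) :
    ((Trg q P v : Finset (Fin k ↪ Fin n)).filter fun τ => w ∈ rg τ).card ≤
    ((Trg q P v : Finset (Fin k ↪ Fin n)).filter fun τ => w' ∈ rg τ).card := by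
  simp only [Finset.mem_insert, not_or] at hw hw'
  have hsP : ∀ i ∈ P, Equiv.swap w w' i = i := by
    intro i hi
    refine Equiv.swap_apply_of_ne_of_ne ?_ ?_
    · rintro rfl; exact hw.2 hi
    · rintro rfl; exact hw'.2 hi
  have hsv : Equiv.swap w w' v = v :=
    Equiv.swap_apply_of_ne_of_ne (Ne.symm hw.1) (Ne.symm hw'.1)
  refine Finset.card_le_card_of_injOn
    (fun τ => τ.trans (Equiv.swap w w').toEmbedding) ?_ ?_
  · intro τ hτ
    simp only [Finset.coe_filter, Trg, Finset.mem_filter, Finset.mem_univ, true_and,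
      Set.mem_ofPred_eq] at hτ ⊢
    obtain ⟨⟨h1, h2⟩, h3⟩ := hτ
    rw [rg_swap]
    refine ⟨⟨?_, ?_⟩, ?_⟩
    · have : P = P.map (Equiv.swap w w').toEmbedding := by
        ext i
        simp only [Finset.mem_map_equiv, Equiv.symm_swap]
        constructor
        · intro hi; rw [hsP i hi]; exact hi
        · intro hi
          have := hsP _ hi
          rw [Equiv.swap_apply_self] at this
          rw [this]; exact hi
      rw [this, ← Finset.map_inter, Finset.card_map]; exact h1
    · simp only [Finset.mem_map_equiv, Equiv.symm_swap, hsv]; exact h2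
    · simp only [Finset.mem_map_equiv, Equiv.symm_swap, Equiv.swap_apply_right]; exact h3
  · intro τ _ τ' _ h
    ext i
    have := DFunLike.congr_fun h i
    simpa using congrArg Fin.val ((Equiv.swap w w').injective this)

lemma trg_inter (q : ℕ) (P : Finset (Fin n)) (v : Fin n) (hv : v ∉ P) (τ : Fin k ↪ Fin n)
    (hτ : τ ∈ Trg q P v) : (rg τ ∩ insert v P).card = q + 1 := by
  simp only [Trg, Finset.mem_filter, Finset.mem_univ, true_and] at hτ
  rw [inter_insert_card _ _ _ hv, hτ.1, if_pos hτ.2]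

lemma sum_inter (S : Finset (Fin k ↪ Fin n)) (Q : Finset (Fin n)) :
    ∑ τ ∈ S, (rg τ ∩ Q).card = ∑ w ∈ Q, (S.filter fun τ => w ∈ rg τ).card := by
  simp only [← Finset.filter_mem_eq_inter]
  have : ∀ τ : Fin k ↪ Fin n, (rg τ).filter (fun x => x ∈ Q) = Q.filter (fun x => x ∈ rg τ) := by
    intro τ; ext; simp [and_comm]
  simp only [this, Finset.card_filter]
  exact Finset.sum_comm

lemma trg_sum (q e : ℕ) (hk : k = q + 1 + e) (P L : Finset (Fin n)) (v : Fin n)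
    (hPL : P ⊆ L) (hvL : v ∈ L) (hv : v ∉ P) :
    n * ∑ τ ∈ (Trg q P v : Finset (Fin k ↪ Fin n)), (rg τ ∩ (L \ insert v P)).card ≤
      e * L.card * (Trg q P v : Finset (Fin k ↪ Fin n)).card := by
  set S : Finset (Fin k ↪ Fin n) := Trg q P v with hS
  set P' := insert v P with hP'
  have hPL' : P' ⊆ L := Finset.insert_subset hvL hPL
  by_cases hR : (Finset.univ \ P').Nonempty
  · obtain ⟨w0, hw0⟩ := hR
    simp only [Finset.mem_sdiff, Finset.mem_univ, true_and] at hw0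
    set N := (S.filter fun τ => w0 ∈ rg τ).card with hN
    have hall : ∀ w ∉ P', (S.filter fun τ => w ∈ rg τ).card = N := fun w hw =>
      le_antisymm (trg_sym q P v w w0 hw hw0) (trg_sym q P v w0 w hw0 hw)
    have h1 : ∑ τ ∈ S, (rg τ ∩ (Finset.univ \ P')).card = e * S.card := by
      rw [Finset.sum_congr rfl (g := fun _ => e), Finset.sum_const, smul_eq_mul, mul_comm]
      intro τ hτ
      have h2 : (rg τ ∩ P').card = q + 1 := trg_inter q P v hv τ hτ
      have h3 : (rg τ ∩ (Finset.univ \ P')) = rg τ \ P' := by ext; simp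
      have h4 := Finset.card_sdiff_add_card_inter (rg τ) P'
      rw [h3]; rw [rg_card] at h4
      omega
    rw [sum_inter, Finset.sum_congr rfl (g := fun _ => N) (fun w hw => hall w (by
      simp at hw; exact hw)), Finset.sum_const, smul_eq_mul] at h1
    rw [sum_inter, Finset.sum_congr rfl (g := fun _ => N) (fun w hw => hall w (by
      simp at hw; exact hw.2)), Finset.sum_const, smul_eq_mul]
    have hc1 : (Finset.univ \ P').card + P'.card = n := by
      have := Finset.card_sdiff_add_card_eq_card (Finset.subset_univ P')
      simpa using this
    have hc2 : (L \ P').card + P'.card = L.card := Finset.card_sdiff_add_card_eq_card hPL'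
    have hLn : L.card ≤ n := by simpa using Finset.card_le_univ L
    have key : n * (L \ P').card ≤ L.card * (Finset.univ \ P').card := by
      generalize (L \ P').card = a at *
      generalize (Finset.univ \ P').card = b at *
      generalize P'.card = c at *
      generalize L.card = d at *
      subst hc2
      have hab : a ≤ b := by omega
      rw [← hc1]; nlinarith
    calc n * ((L \ P').card * N) = n * (L \ P').card * N := by ring
      _ ≤ L.card * (Finset.univ \ P').card * N := Nat.mul_le_mul_right _ key
      _ = L.card * ((Finset.univ \ P').card * N) := by ring
      _ = e * L.card * S.card := by rw [h1]; ring
  · rw [Finset.not_nonempty_iff_eq_empty] at hR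
    have : L \ P' = ∅ := by
      rw [← Finset.subset_empty, ← hR]
      exact Finset.sdiff_subset_sdiff (Finset.subset_univ _) (Finset.Subset.refl _)
    rw [this]; simp

lemma trg_exp (q e t : ℕ) (he : 0 < e) (hk : k = q + 1 + e) (lam : ℝ) (hlam : lam ≤ 0)
    (P L : Finset (Fin n)) (v : Fin n)
    (hPL : P ⊆ L) (hvL : v ∈ L) (hv : v ∉ P) (hLt : L.card ≤ t) :
    ∑ τ ∈ (Trg q P v : Finset (Fin k ↪ Fin n)), Real.exp (lam * ((L ∪ rg τ).card : ℝ)) ≤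
        Real.exp (lam * (L.card : ℝ)) * ((Trg q P v : Finset (Fin k ↪ Fin n)).card : ℝ) *
        (Real.exp (lam * e) + (t / n : ℝ) * (1 - Real.exp (lam * e))) := by
  have hn : 0 < (n : ℝ) := by
    have : 0 < n := v.pos
    exact_mod_cast this
  have heR : 0 < (e : ℝ) := by exact_mod_cast he
  have hPL' : insert v P ⊆ L := Finset.insert_subset hvL hPL
  set E := Real.exp (lam * e) with hE
  have hE1 : E ≤ 1 := by
    rw [hE, Real.exp_le_one_iff]; exact mul_nonpos_of_nonpos_of_nonneg hlam heR.le
  have hpt : ∀ τ ∈ (Trg q P v : Finset (Fin k ↪ Fin n)),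
      Real.exp (lam * ((L ∪ rg τ).card : ℝ)) ≤ Real.exp (lam * (L.card : ℝ)) *
        (E + ((rg τ ∩ (L \ insert v P)).card : ℝ) / e * (1 - E)) := by
    intro τ hτ
    have h2 := trg_inter q P v hv τ hτ
    set j := (rg τ ∩ (L \ insert v P)).card with hj
    have h3 : (L ∪ rg τ).card + j = L.card + e := by
      have a1 : (L ∪ rg τ).card = L.card + (rg τ \ L).card := by
        rw [← Finset.union_sdiff_self_eq_union, Finset.card_union_of_disjoint
          Finset.disjoint_sdiff]
      have a2 := Finset.card_sdiff_add_card_inter (rg τ) L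
      have a3 : (rg τ ∩ L).card = j + (q + 1) := by
        rw [hj, ← h2, ← Finset.card_union_of_disjoint]
        · rw [← Finset.inter_union_distrib_left, Finset.sdiff_union_of_subset hPL']
        · exact Finset.disjoint_of_subset_left Finset.inter_subset_right
            (Finset.disjoint_of_subset_right Finset.inter_subset_right Finset.sdiff_disjoint)
      rw [rg_card] at a2
      omega
    have hje : j ≤ e := by
      have := Finset.card_le_card (Finset.subset_union_left (s₁ := L) (s₂ := rg τ))
      omega
    have hjeR : (j : ℝ) / e ≤ 1 := by
      rw [div_le_one heR]; exact_mod_cast hje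
    have h3R : ((L ∪ rg τ).card : ℝ) = L.card + (e - j) := by
      have : ((L ∪ rg τ).card : ℝ) + j = L.card + e := by exact_mod_cast h3
      linarith
    rw [h3R, mul_add, Real.exp_add]
    refine mul_le_mul_of_nonneg_left ?_ (Real.exp_nonneg _)
    have hc := convexOn_exp.2 (Set.mem_univ (lam * e)) (Set.mem_univ (0:ℝ))
      (sub_nonneg.mpr hjeR) (by positivity : 0 ≤ (j:ℝ) / e) (by ring)
    simp only [smul_eq_mul, mul_zero, add_zero, Real.exp_zero, mul_one] at hc
    have e1 : (1 - (j:ℝ) / e) * (lam * e) = lam * (e - j) := by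
      field_simp
    rw [e1, ← hE] at hc
    calc _ ≤ _ := hc
      _ = _ := by ring
  refine (Finset.sum_le_sum hpt).trans ?_
  rw [← Finset.mul_sum, mul_assoc]
  refine mul_le_mul_of_nonneg_left ?_ (Real.exp_nonneg _)
  rw [Finset.sum_add_distrib, Finset.sum_const, nsmul_eq_mul, ← Finset.sum_mul,
    ← Finset.sum_div, mul_add]
  have hs := trg_sum q e hk P L v hPL hvL hv
  have hsR : (n : ℝ) * ∑ τ ∈ (Trg q P v : Finset (Fin k ↪ Fin n)),
      ((rg τ ∩ (L \ insert v P)).card : ℝ) ≤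
      e * L.card * ((Trg q P v : Finset (Fin k ↪ Fin n)).card : ℝ) := by exact_mod_cast hs
  have hLtR : (L.card : ℝ) ≤ t := by exact_mod_cast hLt
  refine add_le_add le_rfl ?_
  rw [← mul_assoc]
  refine mul_le_mul_of_nonneg_right ?_ (by linarith)
  rw [div_le_iff₀ heR, mul_div_assoc', div_mul_eq_mul_div, le_div_iff₀ hn]
  have : (e : ℝ) * L.card * ((Trg q P v : Finset (Fin k ↪ Fin n)).card : ℝ) ≤
     e * t * ((Trg q P v : Finset (Fin k ↪ Fin n)).card : ℝ) := by gcongr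
  linarith

lemma BJ_card (L : Finset (Fin n)) (J : Finset (Fin k)) :
    L.card.descFactorial J.card * (n - L.card).descFactorial (k - J.card) ≤
    (Finset.univ.filter fun τ : Fin k ↪ Fin n => ∀ i, τ i ∈ L ↔ i ∈ J).card := by
  classical
  have h : Fintype.card (({i // i ∈ J} ↪ {x // x ∈ L}) × ({i // i ∉ J} ↪ {x // x ∉ L})) =
      L.card.descFactorial J.card * (n - L.card).descFactorial (k - J.card) := by
    rw [Fintype.card_prod, Fintype.card_embedding_eq, Fintype.card_embedding_eq,
      Fintype.card_subtype_compl, Fintype.card_subtype_compl]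
    simp
  rw [← h, ← Finset.card_univ]
  refine Finset.card_le_card_of_injOn
    (fun fg => (Equiv.sumCompl (fun i => i ∈ J)).symm.toEmbedding.trans
      ((fg.1.sumMap fg.2).trans (Equiv.sumCompl (fun x => x ∈ L)).toEmbedding)) ?_ ?_
  · intro fg _
    simp only [Finset.coe_filter, Finset.mem_univ, true_and, Set.mem_ofPred_eq]
    intro i
    by_cases hi : i ∈ J
    · simp [hi, Equiv.sumCompl_symm_apply_of_pos]
    · simp [hi, Equiv.sumCompl_symm_apply_of_neg]
      exact (fg.2 ⟨i, hi⟩).2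
  · rintro ⟨f, g⟩ _ ⟨f', g'⟩ _ h
    simp only [Prod.mk.injEq]
    constructor
    · ext ⟨i, hi⟩
      have := DFunLike.congr_fun h i
      simp [hi, Equiv.sumCompl_symm_apply_of_pos] at this
      rw [this]
    · ext ⟨i, hi⟩
      have := DFunLike.congr_fun h i
      simp [hi, Equiv.sumCompl_symm_apply_of_neg] at this
      rw [this]

lemma Unt_bound (q e : ℕ) (hk : k = q + 1 + e) (L : Finset (Fin n)) :
    (Unt q L : Finset (Fin k ↪ Fin n)).card +
      k.choose (q + 1) * (L.card.descFactorial (q + 1) * (n - L.card).descFactorial e) ≤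
      n.descFactorial k := by
  classical
  have hT : n.descFactorial k = (Finset.univ : Finset (Fin k ↪ Fin n)).card := by
    rw [Finset.card_univ, Fintype.card_embedding_eq]; simp
  set B : Finset (Fin k) → Finset (Fin k ↪ Fin n) := fun J =>
    Finset.univ.filter fun τ : Fin k ↪ Fin n => ∀ i, τ i ∈ L ↔ i ∈ J with hB
  set D := (Finset.powersetCard (q+1) (Finset.univ : Finset (Fin k))).biUnion B with hD
  have h1 : D.card = ∑ J ∈ Finset.powersetCard (q+1) (Finset.univ : Finset (Fin k)), (B J).card := by
    refine Finset.card_biUnion ?_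
    intro J _ J' _ hne
    rw [Function.onFun, Finset.disjoint_left]
    intro τ h h'
    simp only [hB, Finset.mem_filter, Finset.mem_univ, true_and] at h h'
    exact hne (by ext i; rw [← h i, h' i])
  have h2 : k.choose (q + 1) * (L.card.descFactorial (q + 1) * (n - L.card).descFactorial e)
      ≤ D.card := by
    rw [h1]
    have : k.choose (q+1) = (Finset.powersetCard (q+1) (Finset.univ : Finset (Fin k))).card := by
      simp
    rw [this, ← smul_eq_mul]
    refine Finset.card_nsmul_le_sum _ _ _ fun J hJ => ?_
    have hc := (Finset.mem_powersetCard.mp hJ).2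
    have := BJ_card L J
    rw [hc, show k - (q+1) = e by omega] at this
    exact this
  have h3 : Disjoint (Unt q L : Finset (Fin k ↪ Fin n)) D := by
    rw [Finset.disjoint_left]
    intro τ h h'
    simp only [Unt, hD, hB, Finset.mem_filter, Finset.mem_univ, true_and, Finset.mem_biUnion] at h h'
    obtain ⟨J, hJ, hJ'⟩ := h'
    have hc := (Finset.mem_powersetCard.mp hJ).2
    have : J.image τ ⊆ rg τ ∩ L := by
      intro x hx
      obtain ⟨i, hi, rfl⟩ := Finset.mem_image.mp hx
      rw [Finset.mem_inter]
      exact ⟨by simp [rg], (hJ' i).mpr hi⟩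
    have := Finset.card_le_card this
    rw [Finset.card_image_of_injective _ τ.injective] at this
    omega
  rw [hT]
  have := Finset.card_le_card (Finset.subset_univ ((Unt q L : Finset (Fin k ↪ Fin n)) ∪ D))
  rw [Finset.card_union_of_disjoint h3] at this
  omega

end cnt

def pT (k q e n t : ℕ) : ℝ :=
  (k.choose (q + 1) : ℝ) * ((t.descFactorial (q + 1) : ℝ) * ((n - t).descFactorial e : ℝ)) /
    (n.descFactorial k : ℝ)

open Classical in
lemma count_t {n m k : ℕ} (q e t : ℕ) (he : 0 < e) (hk : k = q + 1 + e) (hkn : k ≤ n)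
    (htn : t ≤ n) (lam : ℝ) (hlam : lam ≤ 0) (U : Finset (Fin n)) :
    ((Finset.univ.filter fun ω : Fin m → (Fin k ↪ Fin n) => (cl q ω U).card = t).card : ℝ) ≤
      (n.descFactorial k : ℝ) ^ m * Real.exp (lam * (U.card - t) -
        m * pT k q e n t * ((1 - t / n) * (1 - Real.exp (lam * e)))) := by
  have hn : 0 < (n : ℝ) := by
    have : 0 < n := by omega
    exact_mod_cast this
  have hT : 0 < (n.descFactorial k : ℝ) := by
    have := Nat.descFactorial_pos.mpr hkn
    exact_mod_cast this
  set T : ℝ := (n.descFactorial k : ℝ) with hTd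
  set p := pT k q e n t with hp
  have hp0 : 0 ≤ p := by rw [hp, pT]; positivity
  have hTp : T * p = (k.choose (q + 1) : ℝ) * ((t.descFactorial (q + 1) : ℝ) *
      ((n - t).descFactorial e : ℝ)) := by
    rw [hp, pT, ← hTd]; field_simp
  have hUb : ∀ L : Finset (Fin n), L.card = t →
      ((Unt q L : Finset (Fin k ↪ Fin n)).card : ℝ) ≤ T - T * p := by
    intro L hL
    have := Unt_bound q e hk L
    rw [hL] at this
    have h2 : ((Unt q L : Finset (Fin k ↪ Fin n)).card : ℝ) + T * p ≤ T := by
      rw [hTp, hTd]; exact_mod_cast this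
    linarith
  have hA : 0 ≤ T - T * p := by
    obtain ⟨L, _, hL⟩ := Finset.exists_subset_card_eq (s := (Finset.univ : Finset (Fin n)))
      (n := t) (by simpa using htn)
    exact le_trans (by positivity) (hUb L hL)
  set E := Real.exp (lam * e) with hE
  have hE1 : E ≤ 1 := by
    rw [hE, Real.exp_le_one_iff]; exact mul_nonpos_of_nonpos_of_nonneg hlam (by positivity)
  have hE0 : 0 ≤ E := Real.exp_nonneg _
  have ht1 : (t / n : ℝ) ≤ 1 := by
    rw [div_le_one hn]; exact_mod_cast htn
  have ht0 : (0:ℝ) ≤ t / n := by positivity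
  set x := E + (t / n : ℝ) * (1 - E) with hx
  have hx0 : 0 ≤ x := by
    have : 0 ≤ 1 - E := by linarith
    rw [hx]; positivity
  have hx1 : 1 - x = (1 - t / n) * (1 - E) := by rw [hx]; ring
  have hx2 : x ≤ 1 := by
    have : 0 ≤ (1 - t / n : ℝ) * (1 - E) := mul_nonneg (by linarith) (by linarith)
    linarith
  have key := explore (m := m) (k := k) q t (T - T * p) x lam hA hx0 hx2 hUb
    (fun P L v h1 h2 h3 h4 => trg_exp q e t he hk lam hlam P L v h1 h2 h3 h4) _
    (fun _ => .inl ∅) U rfl (fun _ => Finset.empty_subset _)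
  have hU0 : (Unt q (∅ : Finset (Fin n)) : Finset (Fin k ↪ Fin n)) = Finset.univ := by
    ext; simp [Unt]
  have hcu : ((Finset.univ : Finset (Fin k ↪ Fin n)).card : ℝ) = T := by
    rw [Finset.card_univ, Fintype.card_embedding_eq]; simp [hTd]
  simp only [sset, swt, hU0, Fintype.piFinset_univ, Finset.prod_const, Finset.card_univ,
    Fintype.card_fin] at key
  rw [← Finset.card_univ, hcu] at key
  refine key.trans ?_
  have e1 : (T - T * p) * (1 - x) + T * x = T * (1 - p * (1 - x)) := by ring
  have hb0 : 0 ≤ 1 - p * (1 - x) := by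
    have h : 0 ≤ T * (1 - p * (1 - x)) := by
      rw [← e1]; exact add_nonneg (mul_nonneg hA (by linarith)) (by positivity)
    exact nonneg_of_mul_nonneg_right h hT
  rw [e1, mul_pow, ← hx1]
  have h3 : (1 - p * (1 - x)) ^ m ≤ Real.exp (-(m * p * (1 - x))) := by
    have : 1 - p * (1 - x) ≤ Real.exp (-(p * (1 - x))) := by
      have := Real.add_one_le_exp (-(p * (1 - x))); linarith
    calc _ ≤ (Real.exp (-(p * (1 - x)))) ^ m := pow_le_pow_left₀ hb0 this m
      _ = _ := by rw [← Real.exp_nat_mul]; congr 1; ring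
  calc _ = T ^ m * (Real.exp (lam * (U.card - t)) * (1 - p * (1 - x)) ^ m) := by ring
    _ ≤ T ^ m * (Real.exp (lam * (U.card - t)) * Real.exp (-(m * p * (1 - x)))) := by gcongr
    _ = _ := by rw [← Real.exp_add]; rfl

open Classical in
lemma prG_lower {n m k : ℕ} (q e u : ℕ) (he : 0 < e) (hk : k = q + 1 + e) (hkn : k ≤ n)
    (hun : u ≤ n) (α : ℝ) (B : ℕ → ℝ)
    (hB : ∀ t, u ≤ t → (t : ℝ) ≤ (1 - α) * n → t ≤ n → ∃ lam ≤ (0:ℝ),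
       Real.exp (lam * (u - t) -
        m * pT k q e n t * ((1 - t / n) * (1 - Real.exp (lam * e)))) ≤ B t) :
    1 - ∑ t ∈ (Finset.Icc u n).filter (fun t : ℕ => (t : ℝ) ≤ (1 - α) * n), B t ≤
      prG n m k (fun ω : Fin m → (Fin k ↪ Fin n) =>
          ¬ ∃ V : Finset (Fin n), (∀ i ∈ V, u ≤ (i : ℕ)) ∧
              α * n ≤ (V.card : ℝ) ∧ IsStoppingSet (e + 1) ω V) := by
  have hT : 0 < (n.descFactorial k : ℝ) := by
    have := Nat.descFactorial_pos.mpr hkn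
    exact_mod_cast this
  have hcard : (Fintype.card (Fin m → (Fin k ↪ Fin n)) : ℝ) = (n.descFactorial k : ℝ) ^ m := by
    simp [Fintype.card_embedding_eq]
  set T : ℝ := (n.descFactorial k : ℝ) with hTd
  set U : Finset (Fin n) := Finset.univ.filter fun i => (i : ℕ) < u with hU
  have hUc : U.card = u := by
    rw [hU, Fin.card_filter_val_lt]; omega
  set bad : (Fin m → (Fin k ↪ Fin n)) → Prop := fun ω => ∃ V : Finset (Fin n),
    (∀ i ∈ V, u ≤ (i : ℕ)) ∧ α * n ≤ (V.card : ℝ) ∧ IsStoppingSet (e + 1) ω V with hbad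
  set I := (Finset.Icc u n).filter (fun t : ℕ => (t : ℝ) ≤ (1 - α) * n) with hI
  have hsub : (Finset.univ.filter bad) ⊆ I.biUnion fun t =>
      Finset.univ.filter fun ω : Fin m → (Fin k ↪ Fin n) => (cl q ω U).card = t := by
    intro ω hω
    simp only [Finset.mem_filter, Finset.mem_univ, true_and] at hω
    obtain ⟨V, h1, h2, h3⟩ := hω
    have hUV : U ⊆ Vᶜ := by
      intro i hi
      simp only [hU, Finset.mem_filter, Finset.mem_univ, true_and] at hi
      rw [Finset.mem_compl]
      intro hV
      have := h1 i hV
      omega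
    have hcl : Clsd q ω Vᶜ := by
      intro a
      have hsd : rg (ω a) ∩ Vᶜ = rg (ω a) \ V := by ext; simp
      rcases h3 a with h | h
      · left
        have h' : rg (ω a) ∩ V = ∅ := Finset.card_eq_zero.mp h
        intro i hi
        rw [Finset.mem_compl]
        intro hV
        have : i ∈ rg (ω a) ∩ V := Finset.mem_inter.mpr ⟨hi, hV⟩
        rw [h'] at this
        simp at this
      · right
        have h' : e + 1 ≤ (rg (ω a) ∩ V).card := h
        have := Finset.card_sdiff_add_card_inter (rg (ω a)) V
        rw [rg_card] at this
        rw [hsd]; omega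
    have hle := Finset.card_le_card (cl_subset q ω U Vᶜ hUV hcl)
    have hge := Finset.card_le_card (subset_cl q ω U)
    have hVn : V.card ≤ n := by simpa using Finset.card_le_univ V
    rw [Finset.card_compl, Fintype.card_fin] at hle
    simp only [Finset.mem_biUnion, Finset.mem_filter, Finset.mem_univ, true_and, hI,
      Finset.mem_Icc]
    refine ⟨_, ⟨⟨by omega, by omega⟩, ?_⟩, rfl⟩
    have : ((cl q ω U).card : ℝ) + V.card ≤ n := by
      have : (cl q ω U).card + V.card ≤ n := by omega
      exact_mod_cast this
    linarith
  have hbc : ((Finset.univ.filter bad).card : ℝ) ≤ T ^ m * ∑ t ∈ I, B t := by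
    have h1 := (Finset.card_le_card hsub).trans Finset.card_biUnion_le
    have h2 : ((Finset.univ.filter bad).card : ℝ) ≤ ∑ t ∈ I, ((Finset.univ.filter
      fun ω : Fin m → (Fin k ↪ Fin n) => (cl q ω U).card = t).card : ℝ) := by exact_mod_cast h1
    refine h2.trans ?_
    rw [Finset.mul_sum]
    refine Finset.sum_le_sum fun t ht => ?_
    simp only [hI, Finset.mem_filter, Finset.mem_Icc] at ht
    obtain ⟨lam, hlam, hb⟩ := hB t ht.1.1 ht.2 ht.1.2
    have := count_t (m := m) q e t he hk hkn ht.1.2 lam hlam U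
    rw [hUc] at this
    refine this.trans ?_
    gcongr
  have htot : ((Finset.univ.filter fun ω => ¬ bad ω).card : ℝ) = T ^ m -
      ((Finset.univ.filter bad).card : ℝ) := by
    have h := Finset.card_filter_add_card_filter_not (s := Finset.univ) bad
    rw [Finset.card_univ] at h
    have h2 : ((Finset.univ.filter bad).card : ℝ) +
      ((Finset.univ.filter fun ω => ¬ bad ω).card : ℝ) = T ^ m := by
      rw [← hcard]; exact_mod_cast h
    linarith
  unfold prG
  rw [hcard]
  have hfin : 1 - ∑ t ∈ I, B t ≤
      ((Finset.univ.filter fun ω => ¬ bad ω).card : ℝ) / T ^ m := by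
    rw [le_div_iff₀ (by positivity), htot]
    linarith
  convert hfin

lemma bern_aux (q : ℕ) (hq : 1 ≤ q) (τ : ℝ) (hτ : 0 < τ) :
    τ * ((q:ℝ) + 1) ^ (q + 1) ≤ (1 + τ) ^ (q + 1) * (q:ℝ) ^ q := by
  have hq0 : (0:ℝ) < q := by exact_mod_cast hq
  have hy : 0 < (1 + τ) * q / (q + 1) := by positivity
  have h := one_add_mul_le_pow (a := (1 + τ) * q / (q + 1) - 1) (by linarith) (q + 1)
  have e1 : (1:ℝ) + ((q + 1 : ℕ) : ℝ) * ((1 + τ) * q / (q + 1) - 1) = q * τ := by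
    push_cast; field_simp; ring
  rw [e1, add_sub_cancel, div_pow, mul_pow, le_div_iff₀ (by positivity), pow_succ (q:ℝ) q] at h
  have : q * (τ * ((q:ℝ) + 1) ^ (q + 1)) ≤ q * ((1 + τ) ^ (q + 1) * (q:ℝ) ^ q) := by linarith
  exact le_of_mul_le_mul_left this hq0

lemma phi_neg (k r q e : ℕ) (hq : 1 ≤ q) (he : 1 ≤ e) (hr : r = q + 2) (hk : k = q + 1 + e)
    (μ : ℝ) (hμ : muc k r < μ) :
    0 < μ ∧ ∃ c > (0:ℝ), ∃ lam < (0:ℝ), ∀ τ > (0:ℝ), phiE k r μ lam τ ≤ -c := by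
  have hq0 : (0:ℝ) < q := by exact_mod_cast hq
  have he0 : (0:ℝ) < e := by exact_mod_cast he
  have hCb : (0:ℝ) < (k.choose (q + 1) : ℝ) := by
    have := Nat.choose_pos (n := k) (k := q + 1) (by omega)
    exact_mod_cast this
  have hCr : (k.choose r : ℝ) * r = (k.choose (q + 1) : ℝ) * e := by
    have := Nat.choose_succ_right_eq k (q + 1)
    rw [show k - (q + 1) = e by omega] at this
    rw [hr]; exact_mod_cast this
  set Cb : ℝ := (k.choose (q + 1) : ℝ) with hCbd
  have hmuc : muc k r = (q:ℝ) ^ q / (Cb * e * ((q:ℝ) + 1) ^ (q + 1)) := by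
    unfold muc
    rw [← hCr, show r - 2 = q by omega, show r - 1 = q + 1 by omega]
    have h1 : (r:ℝ) - 2 = q := by rw [hr]; push_cast; ring
    have h2 : (r:ℝ) - 1 = q + 1 := by rw [hr]; push_cast; ring
    rw [h1, h2, ← div_eq_inv_mul, div_div]
    congr 1; ring
  have hmp : 0 < muc k r := by rw [hmuc]; positivity
  have hμ0 : 0 < μ := hmp.trans hμ
  refine ⟨hμ0, ?_⟩
  set ρ := μ / muc k r with hρ
  have hρ1 : 1 < ρ := by rw [hρ, lt_div_iff₀ hmp]; linarith
  have hρ0 : 0 < ρ := by linarith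
  have hi : 1 / ρ < 1 := by rw [div_lt_one hρ0]; exact hρ1
  have hi0 : 0 < 1 / ρ := by positivity
  set θ := (1 + 1 / ρ) / 2 with hθ
  have hθ0 : 0 < θ := by rw [hθ]; linarith
  have hθ1 : θ < 1 := by rw [hθ]; linarith
  have hθ2 : 1 / ρ < θ := by rw [hθ]; linarith
  set s := (1 / θ - 1) / e with hs
  have hs0 : 0 < s := by
    rw [hs]
    refine div_pos ?_ he0
    rw [sub_pos, lt_div_iff₀ hθ0]; linarith
  have hes : 1 + e * s = 1 / θ := by rw [hs]; field_simp; ring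
  refine ⟨s * ((θ - 1 / ρ) * (μ * e * Cb)), ?_, -s, by linarith, ?_⟩
  · have : 0 < θ - 1 / ρ := by linarith
    positivity
  intro τ hτ
  unfold phiE
  rw [show r - 1 = q + 1 by omega, ← hCbd]
  have h1 : (k:ℝ) - r + 1 = e := by rw [hk, hr]; push_cast; ring
  rw [h1]
  have hexp : Real.exp (e * -s) ≤ θ := by
    have h := Real.add_one_le_exp (e * s)
    rw [show (e:ℝ) * -s = -(e * s) by ring, Real.exp_neg]
    rw [inv_le_comm₀ (Real.exp_pos _) hθ0]
    rw [← one_div, ← hes]; linarith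
  set G := μ * e * Cb * (1 + τ) ^ (q + 1) with hG
  have hG0 : μ * e * Cb ≤ G := by
    rw [hG]
    refine le_mul_of_one_le_right (by positivity) ?_
    exact one_le_pow₀ (by linarith)
  have hGτ : τ ≤ 1 / ρ * G := by
    have hb := bern_aux q hq τ hτ
    have : 1 / ρ * G = (1 + τ) ^ (q + 1) * (q:ℝ) ^ q / ((q:ℝ) + 1) ^ (q + 1) := by
      rw [hρ, hG, hmuc]
      field_simp
    rw [this, le_div_iff₀ (by positivity)]
    exact hb
  have e2 : e * s * θ = 1 - θ := by
    have : (1 + e * s) * θ = 1 := by rw [hes]; field_simp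
    linarith
  have hM : 0 ≤ μ * Cb * (1 + τ) ^ (q + 1) := by positivity
  have a1 : μ * (Real.exp (e * -s) - 1) * Cb * (1 + τ) ^ (q + 1) ≤ - (s * (θ * G)) := by
    calc _ = (Real.exp (e * -s) - 1) * (μ * Cb * (1 + τ) ^ (q + 1)) := by ring
      _ ≤ (θ - 1) * (μ * Cb * (1 + τ) ^ (q + 1)) := by
        refine mul_le_mul_of_nonneg_right (by linarith) hM
      _ = - (e * s * θ) * (μ * Cb * (1 + τ) ^ (q + 1)) := by rw [e2]; ring
      _ = _ := by rw [hG]; ring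
  have a2 : s * τ ≤ s * (1 / ρ * G) := mul_le_mul_of_nonneg_left hGτ hs0.le
  have a3 : s * ((θ - 1 / ρ) * (μ * e * Cb)) ≤ s * ((θ - 1 / ρ) * G) := by
    refine mul_le_mul_of_nonneg_left ?_ hs0.le
    exact mul_le_mul_of_nonneg_left hG0 (by linarith)
  have : - -s * τ = s * τ := by ring
  linarith [mul_sub s (θ * G) (1 / ρ * G), sub_mul θ (1/ρ) G]

lemma sup_facts (k r q e : ℕ) (hq : 1 ≤ q) (he : 1 ≤ e) (hr : r = q + 2) (hk : k = q + 1 + e)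
    (μ : ℝ) (hμ : muc k r < μ) (S : ℝ) (hS : S = sSup {v : ℝ | ∃ τ > (0 : ℝ),
                v = sInf {w : ℝ | ∃ lam < (0 : ℝ), w = phiE k r μ lam τ}}) :
    S < 0 ∧ ∀ τ > (0:ℝ), ∀ δ > (0:ℝ), ∃ lam < (0:ℝ), phiE k r μ lam τ < S + δ := by
  obtain ⟨hμ0, c, hc, lam0, hl0, hphi⟩ := phi_neg k r q e hq he hr hk μ hμ
  have hbb : ∀ τ > (0:ℝ), BddBelow {w : ℝ | ∃ lam < (0 : ℝ), w = phiE k r μ lam τ} := by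
    intro τ hτ
    refine ⟨- (μ * (k.choose (r - 1) : ℝ) * (1 + τ) ^ (r - 1)), ?_⟩
    rintro w ⟨lam, hlam, rfl⟩
    unfold phiE
    have h1 : 0 ≤ μ * (k.choose (r - 1) : ℝ) * (1 + τ) ^ (r - 1) *
      Real.exp (((k : ℝ) - (r : ℝ) + 1) * lam) := by positivity
    have h2 : 0 ≤ -lam * τ := mul_nonneg (by linarith) hτ.le
    linarith
  have hle : ∀ τ > (0:ℝ), sInf {w : ℝ | ∃ lam < (0 : ℝ), w = phiE k r μ lam τ} ≤ -c :=
    fun τ hτ => (csInf_le (hbb τ hτ) ⟨lam0, hl0, rfl⟩).trans (hphi τ hτ)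
  constructor
  · have : S ≤ -c := by
      rw [hS]
      refine csSup_le ⟨_, 1, one_pos, rfl⟩ ?_
      rintro v ⟨τ, hτ, rfl⟩
      exact hle τ hτ
    linarith
  · intro τ hτ δ hδ
    have h1 : sInf {w : ℝ | ∃ lam < (0 : ℝ), w = phiE k r μ lam τ} ≤ S := by
      rw [hS]
      refine le_csSup ⟨-c, ?_⟩ ⟨τ, hτ, rfl⟩
      rintro v ⟨τ, hτ, rfl⟩
      exact hle τ hτ
    obtain ⟨w, ⟨lam, hlam, rfl⟩, hw⟩ := exists_lt_of_csInf_lt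
      (s := {w : ℝ | ∃ lam < (0 : ℝ), w = phiE k r μ lam τ}) ⟨_, -1, by norm_num, rfl⟩
      (lt_of_le_of_lt h1 (by linarith : S < S + δ))
    exact ⟨lam, hlam, hw⟩

lemma desc_lower (t a : ℕ) (b : ℝ) (hb : 0 ≤ b) (h : b + a ≤ t + 1) :
    b ^ a ≤ (t.descFactorial a : ℝ) := by
  have h1 := Nat.pow_sub_le_descFactorial t a
  have h2 : ((t + 1 - a : ℕ) : ℝ) ^ a ≤ (t.descFactorial a : ℝ) := by exact_mod_cast h1
  refine le_trans (pow_le_pow_left₀ hb ?_ a) h2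
  have : a ≤ t + 1 := by
    have : (a:ℝ) ≤ t + 1 := by linarith
    exact_mod_cast this
  rw [Nat.cast_sub this]; push_cast; linarith

lemma mp_lower (k q e n t m u : ℕ) (hk : k = q + 1 + e) (hkn : k ≤ n) (hu : 0 < u)
    (μ : ℝ) (hμ : 0 < μ) (hm : μ * (n:ℝ) ^ (q + 1) / (u:ℝ) ^ q ≤ m) (x y : ℝ)
    (hx : 0 ≤ x) (hy : 0 ≤ y)
    (hxt : x ≤ (t.descFactorial (q + 1) : ℝ))
    (hyt : (n:ℝ) ^ e * y ≤ ((n - t).descFactorial e : ℝ)) :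
    μ * (k.choose (q + 1) : ℝ) * x / (u:ℝ) ^ q * y ≤ m * pT k q e n t := by
  have hn : 0 < (n:ℝ) := by
    have : 0 < n := by omega
    exact_mod_cast this
  have hu0 : 0 < (u:ℝ) := by exact_mod_cast hu
  have hT : 0 < (n.descFactorial k : ℝ) := by
    have := Nat.descFactorial_pos.mpr hkn
    exact_mod_cast this
  have hT2 : (n.descFactorial k : ℝ) ≤ (n:ℝ) ^ k := by
    exact_mod_cast Nat.descFactorial_le_pow n k
  unfold pT
  calc μ * (k.choose (q + 1) : ℝ) * x / (u:ℝ) ^ q * y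
      = (μ * (n:ℝ) ^ (q + 1) / (u:ℝ) ^ q) *
        ((k.choose (q + 1) : ℝ) * (x * ((n:ℝ) ^ e * y)) / (n:ℝ) ^ k) := by
        rw [hk, pow_add (n:ℝ) (q + 1) e]
        field_simp
    _ ≤ _ := by gcongr

set_option maxHeartbeats 1000000 in
lemma regime1 (k q e n t m u K : ℕ) (hk : k = q + 1 + e) (hkn : k ≤ n) (hu : 0 < u)
    (μ : ℝ) (hμ : 0 < μ) (hm : μ * (n:ℝ) ^ (q + 1) / (u:ℝ) ^ q ≤ m)
    (hut : u ≤ t) (htK : t ≤ K * u) (hqu : (q + 1) ^ 2 ≤ u) (hen : e * (K * u + e) ≤ n)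
    (hKn : K * u ≤ n) :
    μ * (k.choose (q + 1) : ℝ) * ((t + 1) / u : ℝ) ^ (q + 1) * u
      - μ * (k.choose (q + 1) : ℝ) * (K + 1) ^ (q + 1) * ((q + 1) ^ 2 + (e + 1) * K + e ^ 2)
        * (1 + (u:ℝ) ^ 2 / n) ≤ m * pT k q e n t * (1 - t / n) := by
  have hn : 0 < (n:ℝ) := by
    have : 0 < n := by omega
    exact_mod_cast this
  have hu0 : 0 < (u:ℝ) := by exact_mod_cast hu
  have hu1 : 1 ≤ (u:ℝ) := by exact_mod_cast hu
  have htK' : (t:ℝ) ≤ K * u := by exact_mod_cast htK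
  have hut' : (u:ℝ) ≤ t := by exact_mod_cast hut
  have hqu' : ((q:ℝ) + 1) ^ 2 ≤ u := by exact_mod_cast hqu
  have hen' : (e:ℝ) * (K * u + e) ≤ n := by exact_mod_cast hen
  have hKn' : (K:ℝ) * u ≤ n := by exact_mod_cast hKn
  have htn : t ≤ n := htK.trans hKn
  set Cb : ℝ := (k.choose (q + 1) : ℝ) with hCb
  have hCb0 : 0 ≤ Cb := by positivity
  have hq1 : (1:ℝ) ≤ (q:ℝ) + 1 := le_add_of_nonneg_left (by positivity)
  have hqle : (q:ℝ) + 1 ≤ u := by nlinarith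
  -- A1
  set A1 : ℝ := 1 - (q + 1) ^ 2 / (t + 1) with hA1
  set A2 : ℝ := 1 - e * (t + e) / n with hA2
  set A3 : ℝ := 1 - t / n with hA3
  have hx1 : 0 ≤ ((q:ℝ) + 1) ^ 2 / (t + 1) := by positivity
  have hx2 : 0 ≤ (e:ℝ) * (t + e) / n := by positivity
  have hx3 : 0 ≤ (t:ℝ) / n := by positivity
  have hA1' : 0 ≤ A1 := by
    rw [hA1, sub_nonneg, div_le_one (by positivity)]; linarith
  have hA2' : 0 ≤ A2 := by
    rw [hA2, sub_nonneg, div_le_one hn]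
    have : (e:ℝ) * (t + e) ≤ e * (K * u + e) := by gcongr
    linarith
  have hA3' : 0 ≤ A3 := by
    rw [hA3, sub_nonneg, div_le_one hn]; linarith
  have hX : ((t:ℝ) + 1) ^ (q + 1) * A1 ≤ (t.descFactorial (q + 1) : ℝ) := by
    refine le_trans ?_ (desc_lower t (q + 1) (t + 1 - (q + 1)) (by linarith) (by push_cast; linarith))
    have hb := one_add_mul_le_pow (a := -(((q:ℝ) + 1) / (t + 1))) (by
      have : ((q:ℝ) + 1) / (t + 1) ≤ 1 := by
        rw [div_le_one (by positivity)]; linarith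
      linarith) (q + 1)
    have e1 : (t:ℝ) + 1 - (q + 1) = (t + 1) * (1 + -(((q:ℝ) + 1) / (t + 1))) := by
      field_simp
      ring
    rw [e1, mul_pow]
    refine mul_le_mul_of_nonneg_left ?_ (by positivity)
    refine le_trans (le_of_eq ?_) hb
    rw [hA1]; push_cast; ring
  have hY : (n:ℝ) ^ e * A2 ≤ ((n - t).descFactorial e : ℝ) := by
    by_cases he0 : e = 0
    · subst he0; simp [hA2]
    have he1 : (1:ℝ) ≤ e := by
      have : 1 ≤ e := by omega
      exact_mod_cast this
    have hte : (t:ℝ) + e ≤ n := by nlinarith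
    refine le_trans ?_ (desc_lower (n - t) e (n - (t + e)) (by linarith) (by
      rw [Nat.cast_sub htn]; linarith))
    have hb := one_add_mul_le_pow (a := -(((t:ℝ) + e) / n)) (by
      have : ((t:ℝ) + e) / n ≤ 1 := by
        rw [div_le_one hn]; linarith
      linarith) e
    have e1 : (n:ℝ) - (t + e) = n * (1 + -(((t:ℝ) + e) / n)) := by
      field_simp
      ring
    rw [e1, mul_pow]
    refine mul_le_mul_of_nonneg_left ?_ (by positivity)
    refine le_trans (le_of_eq ?_) hb
    rw [hA2]; ring
  have hmp := mp_lower k q e n t m u hk hkn hu μ hμ hm _ A2 (by positivity) hA2' hX hY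
  have hmp3 := mul_le_mul_of_nonneg_right hmp hA3'
  refine le_trans ?_ hmp3
  set M : ℝ := μ * Cb * ((t + 1) / u : ℝ) ^ (q + 1) * u with hM
  have eM : μ * Cb * (((t:ℝ) + 1) ^ (q + 1) * A1) / (u:ℝ) ^ q * A2 * A3 = M * (A1 * A2 * A3) := by
    rw [hM, div_pow, pow_succ (u:ℝ) q]; field_simp
  rw [← hCb, eM]
  have hM0 : 0 ≤ M := by positivity
  have hprod : 1 - ((q + 1) ^ 2 / (t + 1) + e * (t + e) / n + t / n : ℝ) ≤ A1 * A2 * A3 := by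
    have h12 : 1 - ((q + 1) ^ 2 / (t + 1) + e * (t + e) / n : ℝ) ≤ A1 * A2 := by
      rw [hA1, hA2]
      linarith [mul_nonneg hx1 hx2]
    have h12' : A1 * A2 ≤ 1 := mul_le_one₀ (by rw [hA1]; linarith) hA2' (by rw [hA2]; linarith)
    have : A1 * A2 * A3 = A1 * A2 - A1 * A2 * (t / n) := by rw [hA3]; ring
    rw [this]
    have := mul_le_of_le_one_left hx3 h12'
    linarith
  have hMle : M ≤ μ * Cb * (K + 1) ^ (q + 1) * u := by
    rw [hM]
    gcongr
    rw [div_le_iff₀ hu0]; nlinarith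
  have herr : ((q + 1) ^ 2 / (t + 1) + e * (t + e) / n + t / n : ℝ) * u ≤
      ((q + 1) ^ 2 + (e + 1) * K + e ^ 2) * (1 + (u:ℝ) ^ 2 / n) := by
    have b1 : ((q:ℝ) + 1) ^ 2 / (t + 1) * u ≤ (q + 1) ^ 2 := by
      rw [div_mul_eq_mul_div, div_le_iff₀ (by positivity)]
      gcongr; linarith
    have b2 : (e:ℝ) * (t + e) / n * u ≤ (e * K + e ^ 2) * ((u:ℝ) ^ 2 / n) := by
      rw [div_mul_eq_mul_div, mul_div_assoc']
      refine div_le_div_of_nonneg_right ?_ hn.le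
      have : (e:ℝ) * (t + e) * u ≤ e * (K * u + e * u) * u := by
        have h9 : (e:ℝ) ≤ e * u := le_mul_of_one_le_right (Nat.cast_nonneg e) hu1
        have h8 : (t:ℝ) + e ≤ K * u + e * u := by linarith
        exact mul_le_mul_of_nonneg_right (mul_le_mul_of_nonneg_left h8 (Nat.cast_nonneg e)) hu0.le
      refine this.trans (le_of_eq (by ring))
    have b3 : (t:ℝ) / n * u ≤ K * ((u:ℝ) ^ 2 / n) := by
      rw [div_mul_eq_mul_div, mul_div_assoc']
      refine div_le_div_of_nonneg_right ?_ hn.le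
      have h7 := mul_le_mul_of_nonneg_right htK' hu0.le
      linarith [h7, mul_assoc (K:ℝ) u u, sq (u:ℝ)]
    have hw : 0 ≤ (u:ℝ) ^ 2 / n := by positivity
    have c1 : 0 ≤ ((q:ℝ) + 1) ^ 2 * ((u:ℝ) ^ 2 / n) := by positivity
    have c2 : (0:ℝ) ≤ (e + 1) * K + e ^ 2 := by positivity
    have d1 : ((q + 1) ^ 2 / (t + 1) + e * (t + e) / n + t / n : ℝ) * u =
      ((q:ℝ) + 1) ^ 2 / (t + 1) * u + (e:ℝ) * (t + e) / n * u + (t:ℝ) / n * u := by ring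
    have d2 : (((q:ℝ) + 1) ^ 2 + (e + 1) * K + e ^ 2) * (1 + (u:ℝ) ^ 2 / n) =
      ((q:ℝ) + 1) ^ 2 + ((q:ℝ) + 1) ^ 2 * ((u:ℝ) ^ 2 / n) + ((e + 1) * K + e ^ 2) +
      ((e * K + e ^ 2) * ((u:ℝ) ^ 2 / n) + K * ((u:ℝ) ^ 2 / n)) := by ring
    rw [d1, d2]
    linarith
  have hfin : M * ((q + 1) ^ 2 / (t + 1) + e * (t + e) / n + t / n : ℝ) ≤
      μ * Cb * (K + 1) ^ (q + 1) * ((q + 1) ^ 2 + (e + 1) * K + e ^ 2)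
        * (1 + (u:ℝ) ^ 2 / n) := by
    calc _ ≤ μ * Cb * (K + 1) ^ (q + 1) * u *
          ((q + 1) ^ 2 / (t + 1) + e * (t + e) / n + t / n : ℝ) := by
          gcongr
      _ = μ * Cb * (K + 1) ^ (q + 1) *
          (((q + 1) ^ 2 / (t + 1) + e * (t + e) / n + t / n : ℝ) * u) := by ring
      _ ≤ μ * Cb * (K + 1) ^ (q + 1) *
          (((q + 1) ^ 2 + (e + 1) * K + e ^ 2) * (1 + (u:ℝ) ^ 2 / n)) := by
          gcongr
      _ = _ := by ring
  have := mul_le_mul_of_nonneg_left hprod hM0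
  linarith

lemma regime2 (k q e n t m u K : ℕ) (hq : 1 ≤ q) (hk : k = q + 1 + e) (hkn : k ≤ n) (hu : 0 < u)
    (μ : ℝ) (hμ : 0 < μ) (hm : μ * (n:ℝ) ^ (q + 1) / (u:ℝ) ^ q ≤ m)
    (α : ℝ) (hα : 0 < α) (hK : 1 ≤ K)
    (htK : K * u ≤ t) (htn : t ≤ n) (hqu : 2 * (q + 1) ≤ u) (hen : 2 * e ≤ α * n)
    (htα : (t:ℝ) ≤ (1 - α) * n) :
    μ * (k.choose (q + 1) : ℝ) * (1 / 2) ^ (q + 1) * (α / 2) ^ e * K * t ≤ m * pT k q e n t := by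
  have hn : 0 < (n:ℝ) := by
    have : 0 < n := by omega
    exact_mod_cast this
  have hu0 : 0 < (u:ℝ) := by exact_mod_cast hu
  have htK' : (K:ℝ) * u ≤ t := by exact_mod_cast htK
  have hK1 : (1:ℝ) ≤ K := by exact_mod_cast hK
  have hqu' : 2 * ((q:ℝ) + 1) ≤ u := by exact_mod_cast hqu
  have hut : (u:ℝ) ≤ t := by nlinarith
  have hX : ((t:ℝ) / 2) ^ (q + 1) ≤ (t.descFactorial (q + 1) : ℝ) :=
    desc_lower t (q + 1) _ (by positivity) (by push_cast; linarith)
  have hY : (n:ℝ) ^ e * (α / 2) ^ e ≤ ((n - t).descFactorial e : ℝ) := by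
    rw [← mul_pow]
    refine desc_lower (n - t) e _ (by positivity) ?_
    rw [Nat.cast_sub htn]; linarith
  have hmp := mp_lower k q e n t m u hk hkn hu μ hμ hm _ _ (by positivity) (by positivity) hX hY
  refine le_trans ?_ hmp
  have hKt : (K:ℝ) ≤ (t / u : ℝ) ^ q := by
    have h1 : (K:ℝ) ≤ t / u := by rw [le_div_iff₀ hu0]; exact htK'
    exact h1.trans (le_self_pow₀ (by linarith) (by omega))
  calc _ = μ * (k.choose (q + 1) : ℝ) * (1 / 2) ^ (q + 1) * (α / 2) ^ e * t * K := by ring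
    _ ≤ μ * (k.choose (q + 1) : ℝ) * (1 / 2) ^ (q + 1) * (α / 2) ^ e * t * (t / u : ℝ) ^ q := by
      gcongr
    _ = _ := by
      rw [div_pow (t:ℝ) 2, div_pow (t:ℝ) u, pow_succ (t:ℝ) q, div_pow 1 2, one_pow]; field_simp

lemma main_n (k r q e n u m K : ℕ) (hq : 1 ≤ q) (he : 1 ≤ e) (hr : r = q + 2)
    (hk : k = q + 1 + e) (μ α S : ℝ) (hμ : 0 < μ) (hα : 0 < α) (hS0 : S < 0)
    (hSa : ∀ τ > (0:ℝ), ∀ δ > (0:ℝ), ∃ lam < (0:ℝ), phiE k r μ lam τ < S + δ)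
    (hm : μ * (n:ℝ) ^ (q + 1) / (u:ℝ) ^ q ≤ m)
    (hK1 : 1 ≤ K)
    (hK : 2 - S ≤ μ * (k.choose (q + 1) : ℝ) * (1 / 2) ^ (q + 1) * (α / 2) ^ e * (α / 2) * K)
    (hu : 0 < u) (hkn : k ≤ n) (hqu : (q + 1) ^ 2 ≤ u) (hen : e * (K * u + e) ≤ n)
    (hKn : K * u ≤ n) (hqu2 : 2 * (q + 1) ≤ u) (hen2 : 2 * e ≤ α * n)
    (hlog : 1 ≤ Real.log u) (C1 : ℝ)
    (hC1 : C1 = μ * (k.choose (q + 1) : ℝ) * (K + 1) ^ (q + 1) *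
      ((q + 1) ^ 2 + (e + 1) * K + e ^ 2)) :
    1 - Real.exp (S * u + (1 + C1 + Real.log (K + 3) + C1 + 1) *
        max ((u:ℝ) ^ 2 / n) (Real.log u)) ≤
      prG n m k (fun ω : Fin m → (Fin k ↪ Fin n) =>
          ¬ ∃ V : Finset (Fin n), (∀ i ∈ V, u ≤ (i : ℕ)) ∧
              α * n ≤ (V.card : ℝ) ∧ IsStoppingSet (e + 1) ω V) := by
  have hn : 0 < (n:ℝ) := by
    have : 0 < n := by omega
    exact_mod_cast this
  have hu0 : 0 < (u:ℝ) := by exact_mod_cast hu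
  have hu1 : 1 ≤ (u:ℝ) := by exact_mod_cast hu
  have hun : u ≤ n := le_trans (Nat.le_mul_of_pos_left u hK1) hKn
  have hC10 : 0 ≤ C1 := by rw [hC1]; positivity
  have he1 : (1:ℝ) ≤ e := by exact_mod_cast he
  have hK0 : (1:ℝ) ≤ K := by exact_mod_cast hK1
  set w : ℝ := (u:ℝ) ^ 2 / n with hw
  have hw0 : 0 ≤ w := by positivity
  set X : ℝ := Real.exp (S * u + 1 + C1 * (1 + w)) with hX
  set Y : ℝ := Real.exp (S * u) with hY
  have hYX : Y ≤ X := by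
    rw [hX, hY]; apply Real.exp_le_exp.mpr
    have : 0 ≤ C1 * (1 + w) := by positivity
    linarith
  have hY0 : 0 < Y := Real.exp_pos _
  have hX0 : 0 < X := Real.exp_pos _
  set B : ℕ → ℝ := fun t => (if t ≤ K * u then X else 0) + Y * (1 / 2) ^ t with hB
  have hmain := prG_lower (m := m) q e u he hk hkn hun α B (by
    intro t hut htα htn
    have hut' : (u:ℝ) ≤ t := by exact_mod_cast hut
    by_cases htK : t ≤ K * u
    · have hτ : 0 < ((t:ℝ) + 1 - u) / u := by
        apply div_pos _ hu0; linarith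
      obtain ⟨lam, hlam, hph⟩ := hSa _ hτ (1 / u) (by positivity)
      refine ⟨lam, hlam.le, ?_⟩
      have hBX : X ≤ B t := by
        simp only [hB, if_pos htK]
        have : 0 ≤ Y * (1 / 2) ^ t := by positivity
        linarith
      refine le_trans ?_ hBX
      rw [hX]
      apply Real.exp_le_exp.mpr
      have hr1 := regime1 k q e n t m u K hk hkn hu μ hμ hm hut htK hqu hen hKn
      rw [← hC1, ← hw] at hr1
      unfold phiE at hph
      rw [show r - 1 = q + 1 by omega] at hph
      have h1 : (k:ℝ) - r + 1 = e := by rw [hk, hr]; push_cast; ring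
      have h2 : 1 + ((t:ℝ) + 1 - u) / u = (t + 1) / u := by field_simp; ring
      rw [h1, h2, mul_comm (e:ℝ) lam] at hph
      set E := Real.exp (lam * e) with hE
      have hE1 : E ≤ 1 := by
        rw [hE, Real.exp_le_one_iff]
        exact mul_nonpos_of_nonpos_of_nonneg hlam.le (by positivity)
      have hE0 : 0 ≤ E := Real.exp_nonneg _
      set Mt := μ * (k.choose (q + 1) : ℝ) * ((t + 1) / u : ℝ) ^ (q + 1) with hMt
      have h3 := mul_lt_mul_of_pos_right hph hu0
      have h4 : (S + 1 / u) * u = S * u + 1 := by field_simp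
      have h5 : (μ * (E - 1) * (k.choose (q + 1) : ℝ) * ((t + 1) / u : ℝ) ^ (q + 1) -
          lam * (((t:ℝ) + 1 - u) / u)) * u = - (Mt * u * (1 - E)) - lam * (t + 1 - u) := by
        rw [hMt, sub_mul]
        have : lam * (((t:ℝ) + 1 - u) / u) * u = lam * (t + 1 - u) := by field_simp
        rw [this]; ring
      rw [h4, h5] at h3
      have h6 := mul_le_mul_of_nonneg_right hr1 (sub_nonneg.mpr hE1)
      have h7 : C1 * (1 + w) * (1 - E) ≤ C1 * (1 + w) := by
        refine mul_le_of_le_one_right (by positivity) (by linarith)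
      have h8 : (m:ℝ) * pT k q e n t * ((1 - t / n) * (1 - E)) =
        m * pT k q e n t * (1 - t / n) * (1 - E) := by ring
      rw [h8]
      have h9 : (Mt * u - C1 * (1 + w)) * (1 - E) = Mt * u * (1 - E) - C1 * (1 + w) * (1 - E) := by
        ring
      rw [h9] at h6
      have h10 : lam * (u - t) = - lam * (t + 1 - u) + lam := by ring
      rw [h10]
      linarith
    · push Not at htK
      refine ⟨-1, by norm_num, ?_⟩
      have hBY : Y * (1 / 2) ^ t ≤ B t := by
        simp only [hB, if_neg (not_le.mpr htK)]
        linarith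
      refine le_trans ?_ hBY
      have hhalf : Real.exp (-(t:ℝ)) ≤ (1 / 2) ^ t := by
        have h2 : Real.exp (-1) ≤ 1 / 2 := by
          rw [Real.exp_neg, one_div]
          apply inv_anti₀ (by norm_num)
          have := Real.add_one_le_exp (1:ℝ); linarith
        have : Real.exp (-(t:ℝ)) = Real.exp (-1) ^ t := by
          rw [← Real.exp_nat_mul]; congr 1; ring
        rw [this]
        exact pow_le_pow_left₀ (Real.exp_nonneg _) h2 t
      refine le_trans ?_ (mul_le_mul_of_nonneg_left hhalf hY0.le)
      rw [hY, ← Real.exp_add]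
      apply Real.exp_le_exp.mpr
      have hr2 := regime2 k q e n t m u K hq hk hkn hu μ hμ hm α hα hK1 htK.le htn hqu2 hen2 htα
      have hE : Real.exp (-1 * e) ≤ 1 / 2 := by
        have h2 : Real.exp (-1) ≤ 1 / 2 := by
          rw [Real.exp_neg, one_div]
          apply inv_anti₀ (by norm_num)
          have := Real.add_one_le_exp (1:ℝ); linarith
        refine le_trans (Real.exp_le_exp.mpr ?_) h2
        linarith
      have h1 : α ≤ 1 - (t:ℝ) / n := by
        have : (t:ℝ) / n ≤ 1 - α := by rw [div_le_iff₀ hn]; exact htα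
        linarith
      have h2 : α / 2 ≤ (1 - (t:ℝ) / n) * (1 - Real.exp (-1 * e)) := by
        calc α / 2 = α * (1 / 2) := by ring
          _ ≤ _ := mul_le_mul h1 (by linarith) (by norm_num) (by linarith)
      have ht0 : (0:ℝ) ≤ t := by positivity
      have h3 : (2 - S) * t ≤ m * pT k q e n t *
          ((1 - (t:ℝ) / n) * (1 - Real.exp (-1 * e))) := by
        calc (2 - S) * t ≤ μ * (k.choose (q + 1) : ℝ) * (1 / 2) ^ (q + 1) * (α / 2) ^ e *
              (α / 2) * K * t := mul_le_mul_of_nonneg_right hK ht0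
          _ = (μ * (k.choose (q + 1) : ℝ) * (1 / 2) ^ (q + 1) * (α / 2) ^ e * K * t) *
              (α / 2) := by ring
          _ ≤ _ := mul_le_mul hr2 h2 (by positivity)
              (le_trans (by positivity) hr2)
      have h4 : S * t ≤ S * u := mul_le_mul_of_nonpos_left hut' hS0.le
      linarith [sub_mul 2 S (t:ℝ)])
  refine le_trans ?_ hmain
  apply sub_le_sub_left
  set I := (Finset.Icc u n).filter (fun t : ℕ => (t : ℝ) ≤ (1 - α) * n) with hI
  have hs1 : ∑ t ∈ I, (if t ≤ K * u then X else 0) ≤ (K * u + 1) * X := by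
    rw [← Finset.sum_filter, Finset.sum_const, nsmul_eq_mul]
    refine mul_le_mul_of_nonneg_right ?_ hX0.le
    have : (I.filter fun t => t ≤ K * u).card ≤ K * u + 1 := by
      have h : I.filter (fun t => t ≤ K * u) ⊆ Finset.range (K * u + 1) := by
        intro t ht
        simp only [Finset.mem_filter] at ht
        simp only [Finset.mem_range]; omega
      simpa using Finset.card_le_card h
    exact_mod_cast this
  have hs2 : ∑ t ∈ I, Y * (1 / 2 : ℝ) ^ t ≤ 2 * Y := by
    rw [← Finset.mul_sum, mul_comm]
    refine mul_le_mul_of_nonneg_right ?_ hY0.le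
    exact (summable_geometric_two.sum_le_tsum I (fun _ _ => by positivity)).trans (le_of_eq tsum_geometric_two)
  have hsum : ∑ t ∈ I, B t ≤ (K + 3) * u * X := by
    simp only [hB, Finset.sum_add_distrib]
    have h1 : ((K:ℝ) * u + 1) * X + 2 * Y ≤ (K * u + 1) * X + 2 * X := by linarith
    have h2 : ((K:ℝ) * u + 1) * X + 2 * X ≤ (K + 3) * u * X := by
      have : (K:ℝ) * u + 3 ≤ (K + 3) * u := by linarith
      have := mul_le_mul_of_nonneg_right this hX0.le
      linarith
    linarith
  refine hsum.trans ?_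
  have hK3 : (0:ℝ) < K + 3 := by positivity
  have e1 : ((K:ℝ) + 3) * u * X =
      Real.exp (Real.log (K + 3) + Real.log u + (S * u + 1 + C1 * (1 + w))) := by
    rw [Real.exp_add, Real.exp_add, Real.exp_log hK3, Real.exp_log hu0]
  rw [e1]
  apply Real.exp_le_exp.mpr
  set Mx := max w (Real.log u) with hMx
  have m1 : w ≤ Mx := le_max_left _ _
  have m2 : Real.log u ≤ Mx := le_max_right _ _
  have m3 : 1 ≤ Mx := hlog.trans m2
  have l1 : 0 ≤ Real.log ((K:ℝ) + 3) := Real.log_nonneg (by linarith)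
  have t1 : C1 * w ≤ C1 * Mx := mul_le_mul_of_nonneg_left m1 hC10
  have t2 : C1 ≤ C1 * Mx := le_mul_of_one_le_right hC10 m3
  have t3 : Real.log ((K:ℝ) + 3) ≤ Real.log ((K:ℝ) + 3) * Mx := le_mul_of_one_le_right l1 m3
  have : (1 + C1 + Real.log (K + 3) + C1 + 1) * Mx = Mx + C1 * Mx + Real.log (K + 3) * Mx +
    C1 * Mx + Mx := by ring
  rw [this]
  linarith

lemma max_ev (u : ℕ → ℕ) (hu : UGood u) (C c : ℝ) (hc : 0 < c) :
    ∀ᶠ n in atTop, C * max ((u n : ℝ) ^ 2 / n) (Real.log (u n)) ≤ c * u n := by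
  obtain ⟨h1, h2⟩ := hu
  have hd : 0 < c / (|C| + 1) := by positivity
  have h3 : ∀ᶠ n in atTop, (u n : ℝ) / (n : ℝ) < c / (|C| + 1) := h2.eventually_lt_const hd
  have h4 : ∀ᶠ n in atTop, ‖Real.log (u n : ℝ)‖ ≤ c / (|C| + 1) * ‖(u n : ℝ)‖ :=
    h1.eventually (Real.isLittleO_log_id_atTop.def hd)
  filter_upwards [h3, h4] with n h3 h4
  have hu0 : (0:ℝ) ≤ u n := by positivity
  have hM : max ((u n : ℝ) ^ 2 / n) (Real.log (u n)) ≤ c / (|C| + 1) * u n := by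
    apply max_le
    · calc (u n : ℝ) ^ 2 / n = (u n : ℝ) / n * u n := by ring
        _ ≤ _ := mul_le_mul_of_nonneg_right h3.le hu0
    · refine (le_abs_self _).trans ?_
      rw [Real.norm_eq_abs, Real.norm_of_nonneg hu0] at h4
      exact h4
  have hM0 : 0 ≤ max ((u n : ℝ) ^ 2 / n) (Real.log (u n)) := le_max_of_le_left (by positivity)
  have h5 : C * max ((u n : ℝ) ^ 2 / n) (Real.log (u n)) ≤
      (|C| + 1) * max ((u n : ℝ) ^ 2 / n) (Real.log (u n)) :=
    mul_le_mul_of_nonneg_right (by linarith [le_abs_self C]) hM0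
  refine h5.trans ?_
  have h6 := mul_le_mul_of_nonneg_left hM (by positivity : 0 ≤ |C| + 1)
  refine h6.trans (le_of_eq ?_)
  field_simp

/-- Theorem `thm:MU`: for `m = ⌈μ n^{r-1}/u(n)^{r-2}⌉` with
`μ > μ_c(k,r)` and any `α ∈ (0,1)`, the probability that there is NO `(k-r+2)`-stopping
set of size at least `αn` inside `{u(n)+1,…,n}` is at least
`1 - exp((sup_{τ>0} inf_{λ<0} φ_{k,r}(μ,λ,τ)) u(n) + C max{u(n)²/n, log u(n)})`; in
particular it tends to `1` exponentially fast in `u(n)`. -/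
theorem stmt12 (k r : ℕ) (hr : 3 ≤ r) (hrk : r ≤ k)
    (α : ℝ) (hα : α ∈ Set.Ioo (0 : ℝ) 1)
    (u : ℕ → ℕ) (hu : UGood u)
    (μ : ℝ) (hμ : muc k r < μ)
    (m : ℕ → ℕ) (hm : ∀ n, m n = ⌈μ * (n : ℝ) ^ (r - 1) / (u n : ℝ) ^ (r - 2)⌉₊) :
    (∃ C : ℝ, ∀ᶠ n in atTop,
      1 - Real.exp
            ((sSup {v : ℝ | ∃ τ > (0 : ℝ),
                v = sInf {w : ℝ | ∃ lam < (0 : ℝ), w = phiE k r μ lam τ}}) * u n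
              + C * max ((u n : ℝ) ^ 2 / n) (Real.log (u n))) ≤
        prG n (m n) k (fun ω : Fin (m n) → (Fin k ↪ Fin n) =>
          ¬ ∃ V : Finset (Fin n), (∀ i ∈ V, u n ≤ (i : ℕ)) ∧
              α * n ≤ (V.card : ℝ) ∧ IsStoppingSet (k - r + 2) ω V)) ∧
    (∃ c > (0 : ℝ), ∀ᶠ n in atTop,
      1 - Real.exp (-c * u n) ≤
        prG n (m n) k (fun ω : Fin (m n) → (Fin k ↪ Fin n) =>
          ¬ ∃ V : Finset (Fin n), (∀ i ∈ V, u n ≤ (i : ℕ)) ∧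
              α * n ≤ (V.card : ℝ) ∧ IsStoppingSet (k - r + 2) ω V)) := by
  obtain ⟨q, hrq⟩ : ∃ q, r = q + 2 := ⟨r - 2, by omega⟩
  obtain ⟨e, hke⟩ : ∃ e, k = q + 1 + e := ⟨k - (q + 1), by omega⟩
  have hq : 1 ≤ q := by omega
  have he : 1 ≤ e := by omega
  have hd : k - r + 2 = e + 1 := by omega
  rw [hd]
  set S : ℝ := sSup {v : ℝ | ∃ τ > (0 : ℝ),
                v = sInf {w : ℝ | ∃ lam < (0 : ℝ), w = phiE k r μ lam τ}} with hS
  obtain ⟨hS0, hSa⟩ := sup_facts k r q e hq he hrq hke μ hμ S hS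
  obtain ⟨hμ0, -⟩ := phi_neg k r q e hq he hrq hke μ hμ
  have hα0 : 0 < α := hα.1
  have hCb : (0:ℝ) < (k.choose (q + 1) : ℝ) := by
    have := Nat.choose_pos (n := k) (k := q + 1) (by omega)
    exact_mod_cast this
  set c1 : ℝ := μ * (k.choose (q + 1) : ℝ) * (1 / 2) ^ (q + 1) * (α / 2) ^ e * (α / 2) with hc1
  have hc10 : 0 < c1 := by positivity
  obtain ⟨K0, hK0⟩ := exists_nat_ge ((2 - S) / c1)
  set K := K0 + 1 with hKd
  have hK : 2 - S ≤ c1 * K := by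
    rw [div_le_iff₀ hc10] at hK0
    have : (K:ℝ) = K0 + 1 := by rw [hKd]; push_cast; ring
    rw [this]; linarith
  have hut := hu.1
  have hun := hu.2
  have huN : Tendsto u atTop atTop := tendsto_natCast_atTop_iff.mp hut
  have hnt : Tendsto (fun n : ℕ => (n:ℝ)) atTop atTop := tendsto_natCast_atTop_atTop
  set C1 : ℝ := μ * (k.choose (q + 1) : ℝ) * (K + 1) ^ (q + 1) *
      ((q + 1) ^ 2 + (e + 1) * K + e ^ 2) with hC1
  have hev : ∀ᶠ n in atTop,
      1 - Real.exp (S * u n + (1 + C1 + Real.log (K + 3) + C1 + 1) *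
        max ((u n:ℝ) ^ 2 / n) (Real.log (u n))) ≤
      prG n (m n) k (fun ω : Fin (m n) → (Fin k ↪ Fin n) =>
          ¬ ∃ V : Finset (Fin n), (∀ i ∈ V, u n ≤ (i : ℕ)) ∧
              α * n ≤ (V.card : ℝ) ∧ IsStoppingSet (e + 1) ω V) := by
    have v1 := huN.eventually_ge_atTop ((q + 1) ^ 2 + 2 * (q + 1) + e)
    have v2 := eventually_ge_atTop (α := ℕ) k
    have v3 : ∀ᶠ n in atTop, (u n : ℝ) / (n : ℝ) < 1 / (e * (K + 1)) :=
      hun.eventually_lt_const (by positivity)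
    have v4 := (hnt.const_mul_atTop hα0).eventually_ge_atTop (2 * (e:ℝ))
    have v5 := (Real.tendsto_log_atTop.comp hut).eventually_ge_atTop 1
    filter_upwards [v1, v2, v3, v4, v5] with n v1 v2 v3 v4 v5
    have hn : 0 < (n:ℝ) := by
      have : 0 < n := by omega
      exact_mod_cast this
    have hun' : e * ((K + 1) * u n) ≤ n := by
      rw [div_lt_div_iff₀ hn (by positivity), one_mul] at v3
      have : (e:ℝ) * ((K + 1) * u n) ≤ n := by linarith
      exact_mod_cast this
    have g1 : e * (K * u n + e) ≤ n := by
      refine le_trans (Nat.mul_le_mul_left e ?_) hun'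
      have hx : (K + 1) * u n = K * u n + u n := by ring
      have hh : e ≤ u n := by omega
      rw [hx]; exact Nat.add_le_add_left hh _
    have g2 : K * u n ≤ n := by
      refine le_trans ?_ g1
      exact le_trans (Nat.le_add_right _ e) (Nat.le_mul_of_pos_left _ he)
    refine main_n k r q e n (u n) (m n) K hq he hrq hke μ α S hμ0 hα0 hS0 hSa ?_ (by omega) hK
      (by omega) v2 (by omega) g1 g2 (by nlinarith) v4 v5 C1 hC1
    rw [hm n, show r - 1 = q + 1 by omega, show r - 2 = q by omega]
    exact Nat.le_ceil _
  refine ⟨⟨_, hev⟩, -S / 2, by linarith, ?_⟩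
  filter_upwards [hev, max_ev u hu (1 + C1 + Real.log (K + 3) + C1 + 1) (-S / 2) (by linarith)]
    with n h1 h2
  refine le_trans ?_ h1
  apply sub_le_sub_left
  apply Real.exp_le_exp.mpr
  linarith
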